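/- arXiv:1305.2231 — 4 statements merged into one kernel-verified Lean document; each statement's English description precedes it below -/
import Mathlib

section
/- Let F, G : B → C be pseudofunctors between bicategories, and suppose given components γ_A : F A → G A for every object A of B together with invertible 2-cells γ_f : G f ∘ γ_A ⟶ γ_B ∘ F f for every 1-cell f : A → B, natural in f. If these data satisfy the composition condition of a pseudonatural transformation (compatibility of the γ_f with the composition constraints of F and G), then they automatically satisfy the unit condition (compatibility of the γ_{1_A} with the unit constraints of F and G). Hence the unit axiom in the definition of a pseudonatural transformation is redundant. -/
/-!
The composition condition at the pair `(𝟙 a, 𝟙 a)` says, up to constraints, that `γ (𝟙 a)` pasted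
with itself is `γ (𝟙 a)`, an idempotent; being invertible, it is an identity. Concretely, the left
unitality of `F` and `G` expresses `mapComp (𝟙 a) (𝟙 a)` through `mapId a`, naturality of `γ` along
`λ_ (𝟙 a)` removes `𝟙 a ≫ 𝟙 a`, and one copy of `γ (𝟙 a)` cancels. What remains is the unit
condition whiskered on the right by `G.map (𝟙 a)` (`unit_whiskerRight`), and this whiskering is
faithful because `G.map (𝟙 a) ≅ 𝟙 (G.obj a)` (`whiskerRight_injective_of_iso_id`).
-/

/-!
STATEMENT 0: Let `F, G : B → C` be pseudofunctors and suppose given components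
`γ_A : F A ⟶ G A` together with invertible 2-cells `γ_f` (here given as isomorphisms
`F.map f ≫ app b ≅ app a ≫ G.map f` in Mathlib's diagrammatic conventions) natural in `f`.
If these data satisfy the composition condition of a pseudonatural transformation, then
they automatically satisfy the unit condition.  Hence the unit axiom in the definition of a
pseudonatural transformation is redundant.

The unit and composition conditions are stated exactly as in Mathlib's
`StrongOplaxNatTrans.naturality_id` and `StrongOplaxNatTrans.naturality_comp`.
-/

open CategoryTheory Category Bicategory
open scoped Bicategory

universe w₁ w₂ v₁ v₂ u₁ u₂

namespace Thesis

/-- Whiskering on the right by a 1-cell isomorphic to an identity is faithful. -/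
theorem whiskerRight_injective_of_iso_id {C : Type u₂} [Bicategory.{w₂, v₂} C] {x y : C}
    {f g : x ⟶ y} {η θ : f ⟶ g} {k : y ⟶ y} (e : k ≅ 𝟙 y) (h : η ▷ k = θ ▷ k) : η = θ := by
  rw [← whiskerRight_iff, ← cancel_epi (f ◁ e.hom), whisker_exchange, whisker_exchange, h]

/-- The unit condition at `a`, whiskered on the right by `G.map (𝟙 a)`: this is what the composition
condition at `(𝟙 a, 𝟙 a)` becomes after cancelling one copy of `γ (𝟙 a)`. Only the components
`X = app a`, `γ₁ = γ (𝟙 a)` and `γ₁₁ = γ (𝟙 a ≫ 𝟙 a)` are involved. -/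
theorem unit_whiskerRight
    {B : Type u₁} [Bicategory.{w₁, v₁} B] {C : Type u₂} [Bicategory.{w₂, v₂} C]
    (F G : Pseudofunctor B C) {a : B} (X : F.obj a ⟶ G.obj a)
    (γ₁ : F.map (𝟙 a) ≫ X ≅ X ≫ G.map (𝟙 a))
    (γ₁₁ : F.map (𝟙 a ≫ 𝟙 a) ≫ X ≅ X ≫ G.map (𝟙 a ≫ 𝟙 a))
    (nat : F.map₂ (λ_ (𝟙 a)).hom ▷ X ≫ γ₁.hom = γ₁₁.hom ≫ X ◁ G.map₂ (λ_ (𝟙 a)).hom)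
    (comp : γ₁₁.hom ≫ X ◁ (G.mapComp (𝟙 a) (𝟙 a)).hom =
        (F.mapComp (𝟙 a) (𝟙 a)).hom ▷ X ≫ (α_ _ _ _).hom ≫ F.map (𝟙 a) ◁ γ₁.hom ≫
          (α_ _ _ _).inv ≫ γ₁.hom ▷ G.map (𝟙 a) ≫ (α_ _ _ _).hom) :
    (γ₁.hom ≫ X ◁ (G.mapId a).hom) ▷ G.map (𝟙 a) =
      ((F.mapId a).hom ▷ X ≫ (λ_ X).hom ≫ (ρ_ X).inv) ▷ G.map (𝟙 a) := by
  rw [F.mapComp_id_left_hom, G.mapComp_id_left_hom, whiskerLeft_comp, ← reassoc_of% nat,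
    comp_whiskerRight, assoc, cancel_epi] at comp
  -- The unit constraint of `F` moves past the first copy of `γ₁`, which then cancels.
  have key : X ◁ ((λ_ (G.map (𝟙 a))).inv ≫ (G.mapId a).inv ▷ G.map (𝟙 a)) =
      (λ_ _).inv ≫ (F.mapId a).inv ▷ (X ≫ G.map (𝟙 a)) ≫ (α_ _ _ _).inv ≫
        γ₁.hom ▷ G.map (𝟙 a) ≫ (α_ _ _ _).hom := by
    rw [← cancel_epi γ₁.hom, comp, leftUnitor_inv_naturality_assoc, whisker_exchange_assoc]
    simp
  have h : γ₁.hom ▷ G.map (𝟙 a) = (α_ _ _ _).hom ≫ (F.mapId a).hom ▷ (X ≫ G.map (𝟙 a)) ≫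
      (λ_ _).hom ≫ X ◁ ((λ_ (G.map (𝟙 a))).inv ≫ (G.mapId a).inv ▷ G.map (𝟙 a)) ≫
        (α_ _ _ _).inv := by
    rw [key]
    simp
  rw [comp_whiskerRight, h]
  simp

theorem pseudonatural_unit_condition_redundant
    {B : Type u₁} [Bicategory.{w₁, v₁} B] {C : Type u₂} [Bicategory.{w₂, v₂} C]
    (F G : Pseudofunctor B C)
    -- the components
    (app : ∀ a : B, F.obj a ⟶ G.obj a)
    -- the invertible 2-cells `γ_f`
    (γ : ∀ {a b : B} (f : a ⟶ b), F.map f ≫ app b ≅ app a ≫ G.map f)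
    -- naturality of `γ_f` in `f`
    (nat : ∀ {a b : B} {f g : a ⟶ b} (η : f ⟶ g),
      F.map₂ η ▷ app b ≫ (γ g).hom = (γ f).hom ≫ app a ◁ G.map₂ η)
    -- the composition condition
    (comp : ∀ {a b c : B} (f : a ⟶ b) (g : b ⟶ c),
      (γ (f ≫ g)).hom ≫ app a ◁ (G.mapComp f g).hom =
        (F.mapComp f g).hom ▷ app c ≫ (α_ _ _ _).hom ≫ F.map f ◁ (γ g).hom ≫
          (α_ _ _ _).inv ≫ (γ f).hom ▷ G.map g ≫ (α_ _ _ _).hom) :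
    -- then the unit condition holds
    ∀ a : B, (γ (𝟙 a)).hom ≫ app a ◁ (G.mapId a).hom =
      (F.mapId a).hom ▷ app a ≫ (λ_ (app a)).hom ≫ (ρ_ (app a)).inv := by
  intro a
  exact whiskerRight_injective_of_iso_id (G.mapId a)
    (unit_whiskerRight F G (app a) (γ (𝟙 a)) (γ (𝟙 a ≫ 𝟙 a)) (nat _) (comp _ _))

end Thesis
end

section
/- Let F : B → C consist of all the data of a pseudofunctor between bicategories (action on objects, hom-functors, invertible unit constraints F_A and composition constraints F_{g,f}) satisfying naturality and the associativity coherence axiom. Then the left-unity coherence axiom holds if and only if the right-unity coherence axiom holds; that is, either of the two unit axioms implies the other. -/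
/-!
The associativity axiom for the triple `f`, `𝟙 b`, `g`, naturality of the composition constraints,
and the image under `F` of the triangle identity `α ≫ f ◁ λ_ g = ρ_ f ▷ g` together relate
`F(ρ_ f) ▷ F g` to `F f ◁ F(λ_ g)`. Using the triangle identity in `C` as well, left unity for `g`
whiskered by `F f` on the left is equivalent to right unity for `f` whiskered by `F g` on the right
(`whiskered_unity_iff`). Taking `g`, respectively `f`, to be an identity `𝟙 b`, the whiskering can be
cancelled: the unit constraint `F(𝟙 b) ≅ 𝟙 (F b)` is invertible, so whiskering with `F(𝟙 b)` is
faithful, being isomorphic to whiskering with an identity.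
-/

open CategoryTheory Category Bicategory
open scoped Bicategory

universe w₁ w₂ v₁ v₂ u₁ u₂

namespace Thesis

/-- Whiskering on the right with a 1-morphism isomorphic to an identity is faithful. -/
theorem whiskerRight_cancel_of_iso_id {C : Type u₂} [Bicategory.{w₂, v₂} C] {a b : C}
    {f g : a ⟶ b} {h : b ⟶ b} (e : h ≅ 𝟙 b) {η θ : f ⟶ g} (H : η ▷ h = θ ▷ h) : η = θ := by
  have key : η ▷ 𝟙 b = θ ▷ 𝟙 b := by
    rw [← cancel_epi (f ◁ e.hom), whisker_exchange, whisker_exchange, H]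
  simpa using key

/-- Whiskering on the left with a 1-morphism isomorphic to an identity is faithful. -/
theorem whiskerLeft_cancel_of_iso_id {C : Type u₂} [Bicategory.{w₂, v₂} C] {a b : C}
    {f g : a ⟶ b} {h : a ⟶ a} (e : h ≅ 𝟙 a) {η θ : f ⟶ g} (H : h ◁ η = h ◁ θ) : η = θ := by
  have key : 𝟙 a ◁ η = 𝟙 a ◁ θ := by
    rw [← cancel_epi (e.hom ▷ f), ← whisker_exchange, ← whisker_exchange, H]
  simpa using key

/-- Left unity for `g` whiskered by `F f` is equivalent to right unity for `f` whiskered by `F g`: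
the two are related by the associativity axiom for `f`, `𝟙 b`, `g` and the triangle identities. -/
theorem whiskered_unity_iff
    {B : Type u₁} [Bicategory.{w₁, v₁} B] {C : Type u₂} [Bicategory.{w₂, v₂} C]
    (F : PrelaxFunctor B C)
    (mapId : ∀ a : B, F.map (𝟙 a) ≅ 𝟙 (F.obj a))
    (mapComp : ∀ {a b c : B} (f : a ⟶ b) (g : b ⟶ c), F.map (f ≫ g) ≅ F.map f ≫ F.map g)
    (wl : ∀ {a b c : B} (f : a ⟶ b) {g h : b ⟶ c} (η : g ⟶ h),
      F.map₂ (f ◁ η) = (mapComp f g).hom ≫ F.map f ◁ F.map₂ η ≫ (mapComp f h).inv)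
    (wr : ∀ {a b c : B} {f g : a ⟶ b} (η : f ⟶ g) (h : b ⟶ c),
      F.map₂ (η ▷ h) = (mapComp f h).hom ≫ F.map₂ η ▷ F.map h ≫ (mapComp g h).inv)
    (assoc : ∀ {a b c d : B} (f : a ⟶ b) (g : b ⟶ c) (h : c ⟶ d),
      F.map₂ (α_ f g h).hom = (mapComp (f ≫ g) h).hom ≫ (mapComp f g).hom ▷ F.map h ≫
        (α_ (F.map f) (F.map g) (F.map h)).hom ≫ F.map f ◁ (mapComp g h).inv ≫
        (mapComp f (g ≫ h)).inv)
    {a b c : B} (f : a ⟶ b) (g : b ⟶ c) :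
    F.map f ◁ F.map₂ (λ_ g).hom =
        F.map f ◁ ((mapComp (𝟙 b) g).hom ≫ (mapId b).hom ▷ F.map g ≫ (λ_ (F.map g)).hom) ↔
      F.map₂ (ρ_ f).hom ▷ F.map g =
        ((mapComp f (𝟙 b)).hom ≫ F.map f ◁ (mapId b).hom ≫ (ρ_ (F.map f)).hom) ▷ F.map g := by
  -- the image of the triangle identity of `B`, with the outer composition constraints cancelled
  have image : F.map₂ (ρ_ f).hom ▷ F.map g =
      (mapComp f (𝟙 b)).hom ▷ F.map g ≫ (α_ (F.map f) (F.map (𝟙 b)) (F.map g)).hom ≫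
        F.map f ◁ (mapComp (𝟙 b) g).inv ≫ F.map f ◁ F.map₂ (λ_ g).hom := by
    have h := congrArg F.map₂ (triangle f g)
    rw [F.map₂_comp, assoc, wl, wr] at h
    rw [← cancel_mono (mapComp f g).inv, ← cancel_epi (mapComp (f ≫ 𝟙 b) g).hom]
    simpa using h.symm
  -- the triangle identity of `C`, transported along the unit constraint of `b`
  have target : ((mapComp f (𝟙 b)).hom ≫ F.map f ◁ (mapId b).hom ≫ (ρ_ (F.map f)).hom) ▷ F.map g =
      (mapComp f (𝟙 b)).hom ▷ F.map g ≫ (α_ (F.map f) (F.map (𝟙 b)) (F.map g)).hom ≫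
        F.map f ◁ (mapComp (𝟙 b) g).inv ≫
        F.map f ◁ ((mapComp (𝟙 b) g).hom ≫ (mapId b).hom ▷ F.map g ≫ (λ_ (F.map g)).hom) := by
    rw [← whiskerLeft_comp, Iso.inv_hom_id_assoc, whiskerLeft_comp, comp_whiskerRight,
      comp_whiskerRight, ← triangle, associator_naturality_middle_assoc]
  rw [image, target]
  simp only [cancel_epi]

theorem left_unity_iff_right_unity
    {B : Type u₁} [Bicategory.{w₁, v₁} B] {C : Type u₂} [Bicategory.{w₂, v₂} C]
    (F : PrelaxFunctor B C)
    -- invertible unit constraints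
    (mapId : ∀ a : B, F.map (𝟙 a) ≅ 𝟙 (F.obj a))
    -- invertible composition constraints
    (mapComp : ∀ {a b c : B} (f : a ⟶ b) (g : b ⟶ c), F.map (f ≫ g) ≅ F.map f ≫ F.map g)
    -- naturality of the composition constraints in each variable
    (wl : ∀ {a b c : B} (f : a ⟶ b) {g h : b ⟶ c} (η : g ⟶ h),
      F.map₂ (f ◁ η) = (mapComp f g).hom ≫ F.map f ◁ F.map₂ η ≫ (mapComp f h).inv)
    (wr : ∀ {a b c : B} {f g : a ⟶ b} (η : f ⟶ g) (h : b ⟶ c),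
      F.map₂ (η ▷ h) = (mapComp f h).hom ≫ F.map₂ η ▷ F.map h ≫ (mapComp g h).inv)
    -- the associativity coherence axiom
    (assoc : ∀ {a b c d : B} (f : a ⟶ b) (g : b ⟶ c) (h : c ⟶ d),
      F.map₂ (α_ f g h).hom = (mapComp (f ≫ g) h).hom ≫ (mapComp f g).hom ▷ F.map h ≫
        (α_ (F.map f) (F.map g) (F.map h)).hom ≫ F.map f ◁ (mapComp g h).inv ≫
        (mapComp f (g ≫ h)).inv) :
    -- left-unity holds iff right-unity holds
    (∀ {a b : B} (f : a ⟶ b),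
        F.map₂ (λ_ f).hom =
          (mapComp (𝟙 a) f).hom ≫ (mapId a).hom ▷ F.map f ≫ (λ_ (F.map f)).hom) ↔
      (∀ {a b : B} (f : a ⟶ b),
        F.map₂ (ρ_ f).hom =
          (mapComp f (𝟙 b)).hom ≫ F.map f ◁ (mapId b).hom ≫ (ρ_ (F.map f)).hom) := by
  constructor
  · intro left a b f
    refine whiskerRight_cancel_of_iso_id (mapId b) ?_
    exact (whiskered_unity_iff F mapId mapComp wl wr assoc f (𝟙 b)).1 (congrArg _ (left (𝟙 b)))
  · intro right a b f
    refine whiskerLeft_cancel_of_iso_id (mapId a) ?_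
    exact (whiskered_unity_iff F mapId mapComp wl wr assoc (𝟙 a) f).2
      (congrArg (· ▷ F.map f) (right (𝟙 a)))

end Thesis
end

section
/- Let B, C be bicategories and suppose given a function F on objects, functors F_{A,B} : B(A,B) → C(FA,FB), and invertible composition constraints F_{g,f} : F g ∘ F f ⟶ F(g∘f) natural in g and f satisfying the associativity coherence axiom. Then the following are equivalent: (i) these data can be augmented with invertible unit constraints F_A : 1_{FA} ⟶ F(1_A) to form a pseudofunctor, and such an augmentation is unique; (ii) F(1_A) is both representably fully-faithful and co-fully-faithful for every object A of B; (iii) for every object A of B, F(1_A) is either representably fully-faithful or co-fully-faithful. -/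
/-!
The 1-cell `e = F.map (𝟙 a)` is always idempotent up to isomorphism: the composition constraint
and `F.map₂ (λ_ (𝟙 a)).hom` give `μ : e ≫ e ≅ e`.  If whiskering with `e` on one side is fully
faithful, then `μ` descends to an isomorphism `u : e ≅ 𝟙` with `u ▷ e ≫ λ = μ` (or
`e ◁ u ≫ ρ = μ`); see `exists_unit_of_rep` and `exists_unit_of_coRep`.  Conversely, a 1-cell
isomorphic to an identity is fully faithful on both sides.  This gives (iii) → (ii) and (i) → (ii).

For (ii) → (i), take the unique `u` with `u ▷ e ≫ λ = μ`.  The interchange law shows that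
`u ▷ e ≫ λ = e ◁ u ≫ ρ` for any isomorphism `u : e ≅ 𝟙` (`unit_exchange`), so both
unity axioms hold at `f = 𝟙 a`.  Applying the associativity axiom to `(𝟙, 𝟙, f)` and the triangle
identity yields the left unity axiom for `f` after whiskering with `e` on the left, and
co-full-faithfulness cancels `e`.  Right unity is dual, with `(f, 𝟙, 𝟙)`.
-/

/-!
STATEMENT 3: Suppose given the data of a pseudofunctor between bicategories except for the
unit constraints: a `PrelaxFunctor F`, invertible composition constraints
`mapComp f g : F.map (f ≫ g) ≅ F.map f ≫ F.map g` natural in `f` and `g`, satisfying the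
associativity coherence axiom.  Then the following are equivalent:
(i) these data can be augmented with invertible unit constraints to form a pseudofunctor
    (i.e. satisfying the left- and right-unity axioms), and such an augmentation is unique;
(ii) `F.map (𝟙 a)` is representably fully-faithful and co-fully-faithful for every `a`;
(iii) for every `a`, `F.map (𝟙 a)` is either representably fully-faithful or
      co-fully-faithful.
-/

open CategoryTheory Category Bicategory
open scoped Bicategory

universe w₁ w₂ v₁ v₂ u₁ u₂

namespace Thesis

variable {C : Type u₂} [Bicategory.{w₂, v₂} C]

/-- A 1-cell `f : a ⟶ b` is (representably) fully-faithful if for every object `x` the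
functor `(− ≫ f) : (x ⟶ a) → (x ⟶ b)` is fully faithful, i.e. whiskering on the right
with `f` is a bijection on 2-cells. -/
def RepFullyFaithful {a b : C} (f : a ⟶ b) : Prop :=
  ∀ (x : C) (h k : x ⟶ a), Function.Bijective (fun η : h ⟶ k => η ▷ f)

/-- A 1-cell `f : a ⟶ b` is co-fully-faithful if for every object `x` the functor
`(f ≫ −) : (b ⟶ x) → (a ⟶ x)` is fully faithful, i.e. whiskering on the left with `f` is
a bijection on 2-cells. -/
def RepCoFullyFaithful {a b : C} (f : a ⟶ b) : Prop :=
  ∀ (x : C) (h k : b ⟶ x), Function.Bijective (fun η : h ⟶ k => f ◁ η)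

section Whiskering

variable {a b : C}

/-- Full faithfulness on either side is inherited from the identity along an isomorphism, since
whiskering with `𝟙 a` is conjugation by a unitor. -/
theorem fullyFaithful_of_iso_id {e : a ⟶ a} (u : e ≅ 𝟙 a) :
    RepFullyFaithful e ∧ RepCoFullyFaithful e := by
  constructor
  · intro x h k
    have key : ∀ η : h ⟶ k,
        η ▷ e = h ◁ u.hom ≫ (ρ_ h).hom ≫ η ≫ (ρ_ k).inv ≫ k ◁ u.inv := by
      intro η
      have h1 : (ρ_ h).hom ≫ η ≫ (ρ_ k).inv = η ▷ 𝟙 a := by simp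
      rw [reassoc_of% h1, whisker_exchange_assoc]
      simp
    constructor
    · intro η θ hηθ
      simpa [key, cancel_epi, cancel_mono] using hηθ
    · intro θ
      refine ⟨(ρ_ h).inv ≫ h ◁ u.inv ≫ θ ≫ k ◁ u.hom ≫ (ρ_ k).hom, ?_⟩
      simp only [key]
      simp
  · intro x h k
    have key : ∀ η : h ⟶ k,
        e ◁ η = u.hom ▷ h ≫ (λ_ h).hom ≫ η ≫ (λ_ k).inv ≫ u.inv ▷ k := by
      intro η
      have h1 : (λ_ h).hom ≫ η ≫ (λ_ k).inv = 𝟙 a ◁ η := by simp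
      rw [reassoc_of% h1, ← whisker_exchange_assoc]
      simp
    constructor
    · intro η θ hηθ
      simpa [key, cancel_epi, cancel_mono] using hηθ
    · intro θ
      refine ⟨(λ_ h).inv ≫ u.inv ▷ h ≫ θ ≫ u.hom ▷ k ≫ (λ_ k).hom, ?_⟩
      simp only [key]
      simp

theorem exists_unit_of_rep {e : a ⟶ a} (he : RepFullyFaithful e) (μ : e ≫ e ≅ e) :
    ∃ u : e ≅ 𝟙 a, u.hom ▷ e ≫ (λ_ e).hom = μ.hom := by
  obtain ⟨u, hu⟩ := (he a e (𝟙 a)).2 (μ.hom ≫ (λ_ e).inv)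
  obtain ⟨v, hv⟩ := (he a (𝟙 a) e).2 ((λ_ e).hom ≫ μ.inv)
  dsimp only at hu hv
  refine ⟨⟨u, v, (he a _ _).1 ?_, (he a _ _).1 ?_⟩, ?_⟩
  · simp [hu, hv]
  · simp [hu, hv]
  · simp [hu]

theorem exists_unit_of_coRep {e : a ⟶ a} (he : RepCoFullyFaithful e) (μ : e ≫ e ≅ e) :
    ∃ u : e ≅ 𝟙 a, e ◁ u.hom ≫ (ρ_ e).hom = μ.hom := by
  obtain ⟨u, hu⟩ := (he a e (𝟙 a)).2 (μ.hom ≫ (ρ_ e).inv)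
  obtain ⟨v, hv⟩ := (he a (𝟙 a) e).2 ((ρ_ e).hom ≫ μ.inv)
  dsimp only at hu hv
  refine ⟨⟨u, v, (he a _ _).1 ?_, (he a _ _).1 ?_⟩, ?_⟩
  · simp [hu, hv]
  · simp [hu, hv]
  · simp [hu]

/-- Both composites agree after composing with `u`, by interchange of `u` with itself. -/
theorem unit_exchange {e : a ⟶ a} (u : e ≅ 𝟙 a) :
    u.hom ▷ e ≫ (λ_ e).hom = e ◁ u.hom ≫ (ρ_ e).hom := by
  rw [← cancel_mono u.hom, assoc, assoc, ← leftUnitor_naturality, ← rightUnitor_naturality,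
    ← whisker_exchange_assoc, unitors_equal]

end Whiskering

theorem unit_augmentation_tfae
    {B : Type u₁} [Bicategory.{w₁, v₁} B]
    (F : PrelaxFunctor B C)
    (mapComp : ∀ {a b c : B} (f : a ⟶ b) (g : b ⟶ c), F.map (f ≫ g) ≅ F.map f ≫ F.map g)
    (wl : ∀ {a b c : B} (f : a ⟶ b) {g h : b ⟶ c} (η : g ⟶ h),
      F.map₂ (f ◁ η) = (mapComp f g).hom ≫ F.map f ◁ F.map₂ η ≫ (mapComp f h).inv)
    (wr : ∀ {a b c : B} {f g : a ⟶ b} (η : f ⟶ g) (h : b ⟶ c),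
      F.map₂ (η ▷ h) = (mapComp f h).hom ≫ F.map₂ η ▷ F.map h ≫ (mapComp g h).inv)
    (assoc : ∀ {a b c d : B} (f : a ⟶ b) (g : b ⟶ c) (h : c ⟶ d),
      F.map₂ (α_ f g h).hom = (mapComp (f ≫ g) h).hom ≫ (mapComp f g).hom ▷ F.map h ≫
        (α_ (F.map f) (F.map g) (F.map h)).hom ≫ F.map f ◁ (mapComp g h).inv ≫
        (mapComp f (g ≫ h)).inv) :
    -- (i): existence and uniqueness of an augmentation by unit constraints
    ((∃ mapId : ∀ a : B, F.map (𝟙 a) ≅ 𝟙 (F.obj a),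
        ((∀ {a b : B} (f : a ⟶ b),
            F.map₂ (λ_ f).hom =
              (mapComp (𝟙 a) f).hom ≫ (mapId a).hom ▷ F.map f ≫ (λ_ (F.map f)).hom) ∧
          (∀ {a b : B} (f : a ⟶ b),
            F.map₂ (ρ_ f).hom =
              (mapComp f (𝟙 b)).hom ≫ F.map f ◁ (mapId b).hom ≫ (ρ_ (F.map f)).hom)) ∧
        ∀ mapId' : ∀ a : B, F.map (𝟙 a) ≅ 𝟙 (F.obj a),
          ((∀ {a b : B} (f : a ⟶ b),
              F.map₂ (λ_ f).hom =
                (mapComp (𝟙 a) f).hom ≫ (mapId' a).hom ▷ F.map f ≫ (λ_ (F.map f)).hom) ∧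
            (∀ {a b : B} (f : a ⟶ b),
              F.map₂ (ρ_ f).hom =
                (mapComp f (𝟙 b)).hom ≫ F.map f ◁ (mapId' b).hom ≫ (ρ_ (F.map f)).hom)) →
          mapId' = mapId) ↔
      -- (ii)
      (∀ a : B, RepFullyFaithful (F.map (𝟙 a)) ∧ RepCoFullyFaithful (F.map (𝟙 a)))) ∧
    -- (ii) ↔ (iii)
    ((∀ a : B, RepFullyFaithful (F.map (𝟙 a)) ∧ RepCoFullyFaithful (F.map (𝟙 a))) ↔
      (∀ a : B, RepFullyFaithful (F.map (𝟙 a)) ∨ RepCoFullyFaithful (F.map (𝟙 a)))) := by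
  -- the isomorphism `F(𝟙) ≫ F(𝟙) ≅ F(𝟙)`
  let μ : ∀ a : B, F.map (𝟙 a) ≫ F.map (𝟙 a) ≅ F.map (𝟙 a) := fun a =>
    (mapComp (𝟙 a) (𝟙 a)).symm ≪≫ F.map₂Iso (λ_ (𝟙 a))
  have hμ : ∀ a : B,
      (mapComp (𝟙 a) (𝟙 a)).hom ≫ (μ a).hom = F.map₂ (λ_ (𝟙 a)).hom := by
    intro a
    simp [μ]
  refine ⟨⟨?_, ?_⟩, ⟨fun h a => Or.inl (h a).1, ?_⟩⟩
  · rintro ⟨mapId, -⟩ a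
    exact fullyFaithful_of_iso_id (mapId a)
  · intro hF
    choose u hu using fun a => exists_unit_of_rep (hF a).1 (μ a)
    have hu' : ∀ a, F.map (𝟙 a) ◁ (u a).hom ≫ (ρ_ (F.map (𝟙 a))).hom = (μ a).hom :=
      fun a => (unit_exchange (u a)).symm.trans (hu a)
    refine ⟨u, ⟨?_, ?_⟩, ?_⟩
    · intro a b f
      -- the image of the triangle identity for `(𝟙 a, f)`
      have T : F.map₂ (α_ (𝟙 a) (𝟙 a) f).hom ≫ F.map₂ (𝟙 a ◁ (λ_ f).hom) =
          F.map₂ ((λ_ (𝟙 a)).hom ▷ f) := by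
        rw [← F.map₂_comp, triangle, unitors_equal]
      rw [assoc, wl, wr, ← hμ] at T
      simp only [Category.assoc, Iso.inv_hom_id_assoc, comp_whiskerRight, cancel_epi] at T
      simp only [← Category.assoc, cancel_mono] at T
      simp only [Category.assoc] at T
      rw [← Iso.inv_comp_eq]
      apply ((hF a).2 _ _ _).1
      dsimp only
      rw [← cancel_epi (α_ (F.map (𝟙 a)) (F.map (𝟙 a)) (F.map f)).hom, whiskerLeft_comp, T, ← hu']
      simp
    · intro a b f
      -- the image of the triangle identity for `(f, 𝟙 b)`
      have T : F.map₂ (α_ f (𝟙 b) (𝟙 b)).hom ≫ F.map₂ (f ◁ (λ_ (𝟙 b)).hom) =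
          F.map₂ ((ρ_ f).hom ▷ 𝟙 b) := by
        rw [← F.map₂_comp, triangle]
      rw [assoc, wl, wr, ← hμ] at T
      simp only [Category.assoc, Iso.inv_hom_id_assoc, whiskerLeft_comp,
        whiskerLeft_inv_hom_assoc, cancel_epi] at T
      simp only [← Category.assoc, cancel_mono] at T
      simp only [Category.assoc] at T
      rw [← Iso.inv_comp_eq]
      apply ((hF b).1 _ _ _).1
      dsimp only
      rw [comp_whiskerRight, ← T, ← hu]
      simp
    · rintro v ⟨hv, -⟩
      funext a
      ext
      -- left unity at `𝟙 a` determines `v a ▷ F(𝟙 a)`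
      apply ((hF a).1 _ _ _).1
      dsimp only
      have h := hv (𝟙 a)
      rw [← hμ, ← hu] at h
      simpa using h.symm
  · intro h a
    rcases h a with h | h
    · exact fullyFaithful_of_iso_id (exists_unit_of_rep h (μ a)).choose
    · exact fullyFaithful_of_iso_id (exists_unit_of_coRep h (μ a)).choose

end Thesis
end

section
/- Mating preserves horizontal pasting: in a bicategory, let σ₁ : k ∘ f₁ ⟶ f₁' ∘ h and τ₁ : h ∘ g₁ ⟶ g₁' ∘ k be mates with respect to adjunctions f₁ ⊣ g₁ and f₁' ⊣ g₁', and let σ₂ : n ∘ f₂ ⟶ f₂' ∘ k and τ₂ : k ∘ g₂ ⟶ g₂' ∘ n be mates with respect to adjunctions f₂ ⊣ g₂ and f₂' ⊣ g₂'. Then the horizontal pasting of σ₁ and σ₂ (a 2-cell n ∘ (f₂ ∘ f₁) ⟶ (f₂' ∘ f₁') ∘ h, up to structural isomorphisms) and the horizontal pasting of τ₁ and τ₂ (a 2-cell h ∘ (g₁ ∘ g₂) ⟶ (g₁' ∘ g₂') ∘ n) are mates with respect to the composite adjunctions f₂ ∘ f₁ ⊣ g₁ ∘ g₂ and f₂'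 ∘ f₁' ⊣ g₁' ∘ g₂'. -/
/-!
STATEMENT 8: Mating preserves horizontal pasting.  If `σ₁`/`τ₁` are mates with respect to
`f₁ ⊣ g₁`, `f₁' ⊣ g₁'` (with connecting 1-cells `h`, `k`) and `σ₂`/`τ₂` are mates with
respect to `f₂ ⊣ g₂`, `f₂' ⊣ g₂'` (with connecting 1-cells `k`, `n`), then the horizontal
pastings of `σ₁, σ₂` and of `τ₁, τ₂` are mates with respect to the composite adjunctions
`f₁ ≫ f₂ ⊣ g₂ ≫ g₁` and `f₁' ≫ f₂' ⊣ g₂' ≫ g₁'`.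

Conventions: `≫` is diagrammatic (the paper's `f₂ ∘ f₁` is `f₁ ≫ f₂`); following the
paper's pasting diagrams, `σᵢ` goes from the "down-then-across" composite to the
"across-then-down" composite, and conversely for `τᵢ`.
-/

/-!
Each mate `τᵢ` is the pasting of `σᵢ` with the unit of `fᵢ' ⊣ gᵢ'` and the counit of `fᵢ ⊣ gᵢ`.
The unit and counit of a composite adjunction are themselves pastings of the units and counits of
its factors, so the mate of the pasted `σ`s and the pasting of the `τ`s involve the same six
2-cells, and differ only by interchange and coherence; no triangle identity is needed.
Interchange is the content of Mathlib's `mateEquiv_hcomp`. Transferring it here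
(`rightMate_eq_mateEquiv`) leaves only comparisons of associators and unitors.
-/

open CategoryTheory Category Bicategory
open scoped Bicategory

universe w v u

namespace Thesis

variable {B : Type u} [Bicategory.{w, v} B]

/-- The right mate of `σ`, obtained by pasting `σ` with the unit of `f' ⊣ g'` and the counit
of `f ⊣ g`. -/
def rightMate {a b a' b' : B} {f : a ⟶ b} {g : b ⟶ a} {f' : a' ⟶ b'} {g' : b' ⟶ a'}
    (adj : f ⊣ g) (adj' : f' ⊣ g') (h : a ⟶ a') (k : b ⟶ b')
    (σ : h ≫ f' ⟶ f ≫ k) : g ≫ h ⟶ k ≫ g' :=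
  𝟙 (g ≫ h) ⊗≫ (g ≫ h) ◁ adj'.unit ⊗≫ g ◁ σ ▷ g' ⊗≫ adj.counit ▷ (k ≫ g') ⊗≫ 𝟙 (k ≫ g')

/-- Identifies `rightMate` with Mathlib's `mateEquiv`, making `mateEquiv_hcomp` available: the two
pastings differ only by associators and unitors. -/
theorem rightMate_eq_mateEquiv {a b a' b' : B} {f : a ⟶ b} {g : b ⟶ a} {f' : a' ⟶ b'}
    {g' : b' ⟶ a'} (adj : f ⊣ g) (adj' : f' ⊣ g') (h : a ⟶ a') (k : b ⟶ b')
    (σ : h ≫ f' ⟶ f ≫ k) : rightMate adj adj' h k σ = mateEquiv adj adj' σ := by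
  rw [mateEquiv_apply', rightMate]
  bicategory

theorem mates_horizontal_pasting
    {a b c a' b' c' : B}
    {f₁ : a ⟶ b} {g₁ : b ⟶ a} {f₂ : b ⟶ c} {g₂ : c ⟶ b}
    {f₁' : a' ⟶ b'} {g₁' : b' ⟶ a'} {f₂' : b' ⟶ c'} {g₂' : c' ⟶ b'}
    (adj₁ : f₁ ⊣ g₁) (adj₂ : f₂ ⊣ g₂) (adj₁' : f₁' ⊣ g₁') (adj₂' : f₂' ⊣ g₂')
    (h : a ⟶ a') (k : b ⟶ b') (n : c ⟶ c')
    (σ₁ : h ≫ f₁' ⟶ f₁ ≫ k) (σ₂ : k ≫ f₂' ⟶ f₂ ≫ n)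
    (τ₁ : g₁ ≫ h ⟶ k ≫ g₁') (τ₂ : g₂ ≫ k ⟶ n ≫ g₂')
    (h₁ : τ₁ = rightMate adj₁ adj₁' h k σ₁)
    (h₂ : τ₂ = rightMate adj₂ adj₂' k n σ₂) :
    (𝟙 ((g₂ ≫ g₁) ≫ h) ⊗≫ g₂ ◁ τ₁ ⊗≫ τ₂ ▷ g₁' ⊗≫ 𝟙 (n ≫ g₂' ≫ g₁') :
        (g₂ ≫ g₁) ≫ h ⟶ n ≫ g₂' ≫ g₁') =
      rightMate (adj₁.comp adj₂) (adj₁'.comp adj₂') h n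
        (𝟙 (h ≫ f₁' ≫ f₂') ⊗≫ σ₁ ▷ f₂' ⊗≫ f₁ ◁ σ₂ ⊗≫ 𝟙 ((f₁ ≫ f₂) ≫ n)) := by
  subst h₁ h₂
  simp only [rightMate_eq_mateEquiv]
  have := mateEquiv_hcomp adj₁ adj₁' adj₂ adj₂' σ₁ σ₂
  dsimp only [leftAdjointSquare.hcomp, rightAdjointSquare.hcomp] at this
  calc
    _ = _ := by bicategory
    _ = _ := this.symm
    _ = _ := by
      congr 1
      bicategory

end Thesis
end
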